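/- For three thieves (q = 3): given any necklace with m colors, and for each color j with 3 ∤ a_j any prescribed choice of the thief (if a_j ≡ 1 mod 3) or the two thieves (if a_j ≡ 2 mod 3) who receive ⌈a_j/3⌉ beads of color j, there exists a fair 3-splitting with at most 2m cuts realizing the prescription. -/

import Mathlib

/-!
Give every bead `M` copies, where `M` is large, and encode a splitting among `p` thieves, `p` prime,
as a word in the thieves with a separator between consecutive copies. The words without empty blocks
and with at most `d + 1` runs, where `d = (p - 1) * m`, index the cells of a complex with an action
of the cyclic group `ZMod p`; in a cell, several thieves may receive the same copy.

Suppose that in every cell some thief can receive too many copies of some color. So few runs leave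
no room for all thieves to be in excess of the same color. The first color with an excess and the
number of thieves in excess of it give a rank below `d` that does not decrease from a cell to its
faces, and the average of these thieves gives a label that is translated by the action. As cells of
equal rank and distinct labels do not touch, a cocycle supported on ranks at most `e` that is
invariant (or has norm zero) is the norm (or a difference of translates) of a cochain glued along
the labels, whose coboundary is supported on ranks below `e`. Passing to such coboundaries again and
again leads from the augmentation to the zero cochain. But the value on the chains of the periodic
resolution of `ZMod p`, which the iterated Alexander-Whitney diagonal carries into the complex, does
not change on the way, and the augmentation has value `1`.

In a cell without excess, any set `A` of beads of a color satisfies `p * |A| ≤ |T| * a`, where `T`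
is the set of thieves who can receive a copy of a bead in `A` and `a` is the number of beads of the
color. For `p = 3` this is enough for Hall's condition with the prescribed shares, whatever the
prescription, and giving every bead to one thief who can receive a copy of it needs no new cuts.
-/

namespace NecklaceSplitting

open Finset

section Coboundary

variable {α β R : Type*} [Ring R]

/-- The alternating sum of the values of a cochain at the words obtained from the given word by
deleting one letter satisfying `p`, signed by the position of that letter. -/
def faceSum (p : α → Bool) : List α → (List α → R) →ₗ[R] R
  | [] => 0
  | a :: u => (if p a then LinearMap.proj u else 0) -
      faceSum p u ∘ₗ LinearMap.funLeft R R (List.cons a)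

/-- The simplicial coboundary on cochains of words, the faces of a word being obtained by deleting
one letter satisfying `p`. The other letters are never deleted, but count for the signs. -/
def coboundary (p : α → Bool) : Module.End R (List α → R) := LinearMap.pi (faceSum p)

theorem coboundary_nil (p : α → Bool) (W : List α → R) : coboundary p W [] = 0 := rfl

theorem coboundary_cons (p : α → Bool) (W : List α → R) (a : α) (u : List α) :
    coboundary p W (a :: u) =
      (if p a then W u else 0) - coboundary p (fun v => W (a :: v)) u := by
  change (if p a then LinearMap.proj u else 0 : (List α → R) →ₗ[R] R) W - _ = _
  split_ifs <;> rfl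

theorem coboundary_comp_cons (p : α → Bool) (W : List α → R) (a : α) :
    (fun v => coboundary p W (a :: v)) =
      (if p a then W else 0) - coboundary p (fun v => W (a :: v)) := by
  funext v
  rw [coboundary_cons]
  split_ifs <;> rfl

theorem coboundary_coboundary (p : α → Bool) (W : List α → R) :
    coboundary p (coboundary p W) = 0 := by
  funext u
  induction u generalizing W with
  | nil => rfl
  | cons a u ih =>
    have ih' := ih fun v => W (a :: v)
    rw [coboundary_cons, coboundary_comp_cons, map_sub, Pi.sub_apply, ih', Pi.zero_apply, sub_zero]
    split_ifs <;> simp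

/-- The pullback of cochains along the letterwise application of a map to words. -/
def relabel (f : α → β) : (List β → R) →ₗ[R] (List α → R) := LinearMap.funLeft R R (List.map f)

theorem relabel_apply (f : α → β) (W : List β → R) (u : List α) :
    relabel f W u = W (u.map f) := rfl

theorem coboundary_relabel (p : α → Bool) (q : β → Bool) (f : α → β) (hf : ∀ a, q (f a) = p a)
    (W : List β → R) : coboundary p (relabel f W) = relabel f (coboundary q W) := by
  funext u
  induction u generalizing W with
  | nil => rfl
  | cons a u ih =>
    rw [relabel_apply, List.map_cons, coboundary_cons, coboundary_cons, hf]
    exact congrArg _ (ih fun v => W (f a :: v))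

theorem relabel_pow (f : α → α) (i : ℕ) :
    (relabel f : Module.End R (List α → R)) ^ i = relabel f^[i] := by
  induction i with
  | zero => ext W u; simp [relabel_apply]
  | succ i ih => ext W u; simp [pow_succ', ih, relabel_apply]

theorem relabel_pow_eq_one {f : α → α} {q : ℕ} (hf : f^[q] = id) :
    (relabel f : Module.End R (List α → R)) ^ q = 1 := by
  ext W u
  simp [relabel_pow, hf, relabel_apply]

/-- The face relation of `coboundary p`. -/
inductive IsFace (p : α → Bool) : List α → List α → Prop
  | head {a : α} (u : List α) (ha : p a) : IsFace p u (a :: u)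
  | cons (a : α) {v u : List α} (h : IsFace p v u) : IsFace p (a :: v) (a :: u)

theorem IsFace.sublist {p : α → Bool} {v u : List α} (h : IsFace p v u) : v.Sublist u := by
  induction h with
  | head u _ => exact List.sublist_cons_self _ u
  | cons a _ ih => exact ih.cons_cons a

theorem coboundary_congr {p : α → Bool} {V W : List α → R} {u : List α}
    (h : ∀ v, IsFace p v u → V v = W v) : coboundary p V u = coboundary p W u := by
  induction u generalizing V W with
  | nil => rfl
  | cons a u ih =>
    rw [coboundary_cons, coboundary_cons, ih fun v hv => h _ (hv.cons a)]
    split_ifs with ha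
    · rw [h u (.head u ha)]
    · rfl

end Coboundary

section CyclicResolution

/-- For `x ^ q = 1`, these elements are the differentials of the periodic resolution of the cyclic
group of order `q`. -/
def cyclicDifferential {A : Type*} [Ring A] (q k : ℕ) (x : A) : A :=
  if Even k then x - 1 else ∑ i ∈ range q, x ^ i

theorem cyclicDifferential_mul_succ {A : Type*} [Ring A] {q : ℕ} {x : A} (hx : x ^ q = 1) (k : ℕ) :
    cyclicDifferential q k x * cyclicDifferential q (k + 1) x = 0 := by
  by_cases hk : Even k
  · simp [cyclicDifferential, hk, Nat.even_add_one, mul_geom_sum, hx]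
  · simp [cyclicDifferential, hk, Nat.even_add_one, geom_sum_mul, hx]

variable {α R M N : Type*} [Ring R] [AddCommGroup M] [Module R M] [AddCommGroup N] [Module R N]

theorem comp_cyclicDifferential {f : M →ₗ[R] N} {S : Module.End R M} {T : Module.End R N}
    (h : f ∘ₗ S = T ∘ₗ f) (q k : ℕ) :
    f ∘ₗ cyclicDifferential q k S = cyclicDifferential q k T ∘ₗ f := by
  unfold cyclicDifferential
  split_ifs
  · ext x
    simpa using LinearMap.congr_fun h x
  · ext x
    simp only [LinearMap.comp_apply, LinearMap.sum_apply, map_sum]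
    exact sum_congr rfl fun i _ =>
      (LinearMap.congr_fun (Module.End.commute_pow_left_of_commute h.symm i) x).symm

theorem cyclicDifferential_coboundary {p : α → Bool} {f : α → α} (hf : ∀ a, p (f a) = p a)
    (q k : ℕ) (W : List α → R) :
    cyclicDifferential q k (relabel f) (coboundary p W) =
      coboundary p (cyclicDifferential q k (relabel f) W) :=
  (LinearMap.congr_fun (comp_cyclicDifferential (f := coboundary p)
    (LinearMap.ext fun V => coboundary_relabel p p f hf V) q k) W).symm

theorem cyclicDifferential_relabel_apply_eq_zero {f : α → α} {W : List α → R}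
    {u : List α} (h : ∀ i, W (u.map f^[i]) = 0) (q k : ℕ) :
    cyclicDifferential q k (relabel f) W u = 0 := by
  unfold cyclicDifferential
  split_ifs
  · simpa [relabel_apply, show W (u.map f) = 0 from h 1] using h 0
  · simp [relabel_pow, relabel_apply, h]

variable (R) in
/-- The evaluation of cochains at the `k`-th generator `e k` of a resolution of `ℤ/q` by chains of
words: `e 0` is the word `0`, and `e (k + 1)` is the cone with apex `0` over the boundary of
`e (k + 1)`, which is `e k` acted on by a cyclic differential. -/
def resolutionEval (q : ℕ) : ℕ → (List (ZMod q) → R) →ₗ[R] R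
  | 0 => LinearMap.proj [0]
  | k + 1 => resolutionEval q k ∘ₗ cyclicDifferential q k (relabel (· + 1)) ∘ₗ
      LinearMap.funLeft R R (List.cons 0)

theorem iterate_add_one (q : ℕ) : (· + (1 : ZMod q))^[q] = id := by
  funext t
  simp

theorem resolutionEval_succ (q k : ℕ) (V : List (ZMod q) → R) :
    resolutionEval R q (k + 1) V =
      resolutionEval R q k (cyclicDifferential q k (relabel (· + 1)) fun v => V (0 :: v)) := rfl

theorem resolutionEval_coboundary (q k : ℕ) (V : List (ZMod q) → R) :
    resolutionEval R q (k + 1) (coboundary (fun _ => true) V) =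
      resolutionEval R q k (cyclicDifferential q k (relabel (· + 1)) V) := by
  rw [resolutionEval_succ, coboundary_comp_cons, if_pos rfl, map_sub, map_sub,
    cyclicDifferential_coboundary (p := fun _ => true) (f := (· + 1)) fun _ => rfl, sub_eq_self]
  cases k with
  | zero =>
    simp [resolutionEval, coboundary_cons, coboundary_nil, cyclicDifferential, relabel_apply]
  | succ k =>
    rw [resolutionEval_coboundary, ← Module.End.mul_apply,
      cyclicDifferential_mul_succ (relabel_pow_eq_one (iterate_add_one q))]
    simp

theorem resolutionEval_eq_zero {q k : ℕ} {V : List (ZMod q) → R}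
    (h : ∀ v, v.length = k + 1 → V v = 0) : resolutionEval R q k V = 0 := by
  induction k generalizing V with
  | zero => exact h [0] rfl
  | succ k ih =>
    rw [resolutionEval_succ]
    exact ih fun v hv => cyclicDifferential_relabel_apply_eq_zero
      (fun i => h (0 :: v.map (· + 1)^[i]) (by simp [hv])) q k

end CyclicResolution

section Runs

variable {α β : Type*} [DecidableEq α] [DecidableEq β]

/-- The number of maximal constant runs of a word; a word with `r + 1` runs is cut `r` times. -/
def runCount (l : List α) : ℕ := (l.destutter (· ≠ ·)).length

theorem runCount_cons_cons (a b : α) (l : List α) :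
    runCount (a :: b :: l) = runCount (b :: l) + if a = b then 0 else 1 := by
  by_cases h : a = b <;> simp [runCount, List.destutter_cons', h]

theorem runCount_le_of_sublist {l₁ l₂ : List α} (h : l₁.Sublist l₂) :
    runCount l₁ ≤ runCount l₂ :=
  List.IsChain.length_le_length_destutter_ne ((List.destutter_sublist _ l₁).trans h)
    (List.isChain_destutter _ l₁)

theorem runCount_cons_pos (t : α) (l : List α) : 0 < runCount (t :: l) :=
  zero_lt_one.trans_le (runCount_le_of_sublist (List.cons_sublist_cons.2 (List.nil_sublist l)))

theorem runCount_map {f : α → β} (hf : Function.Injective f) (l : List α) :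
    runCount (l.map f) = runCount l := by
  have h := congrArg List.length (List.map_destutter_ne l hf)
  rwa [List.length_map, eq_comm] at h

theorem runCount_le_length (l : List α) : runCount l ≤ l.length :=
  (List.destutter_sublist _ l).length_le

end Runs

section Cutting

variable {α β R : Type*} [Ring R]

/-- The words obtained from a word by cutting it `n` times at a letter, which is repeated on both
sides of the separator `none`. This is the iterated Alexander-Whitney diagonal. -/
def cuts : ℕ → List α → List (List (Option α))
  | 0, v => [v.map some]
  | _ + 1, [] => []
  | n + 1, t :: v => (cuts n (t :: v)).map (fun u => some t :: none :: u) ++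
      (cuts (n + 1) v).map (some t :: ·)
termination_by n v => n + v.length

theorem cuts_map (f : α → β) (n : ℕ) (v : List α) :
    cuts n (v.map f) = (cuts n v).map (List.map (Option.map f)) := by
  fun_induction cuts n v with
  | case1 => simp [cuts]
  | case2 => simp [cuts]
  | case3 n t v ih₁ ih₂ =>
    rw [List.map_cons] at ih₁
    simp [cuts, ih₁, ih₂, Function.comp_def]

/-- The pullback of cochains along the iterated Alexander-Whitney diagonal. -/
def cutSum (n : ℕ) : (List (Option α) → R) →ₗ[R] (List α → R) where
  toFun W v := ((cuts n v).map W).sum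
  map_add' _ _ := funext fun _ => List.sum_map_add
  map_smul' _ _ := funext fun _ => List.sum_map_mul_left ..

theorem cutSum_apply (n : ℕ) (W : List (Option α) → R) (v : List α) :
    cutSum n W v = ((cuts n v).map W).sum := rfl

theorem cutSum_zero_apply (W : List (Option α) → R) : cutSum 0 W = relabel some W := by
  funext v
  simp [cutSum_apply, cuts, relabel_apply]

theorem cutSum_succ_nil (n : ℕ) (W : List (Option α) → R) : cutSum (n + 1) W [] = 0 := by
  simp [cutSum_apply, cuts]

theorem cutSum_succ_cons (n : ℕ) (W : List (Option α) → R) (t : α) (v : List α) :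
    cutSum (n + 1) W (t :: v) =
      cutSum n (fun u => W (some t :: none :: u)) (t :: v) +
        cutSum (n + 1) (fun u => W (some t :: u)) v := by
  simp [cutSum_apply, cuts, Function.comp_def]

theorem relabel_cutSum (f : α → β) (n : ℕ) (W : List (Option β) → R) :
    relabel f (cutSum n W) = cutSum n (relabel (Option.map f) W) := by
  funext v
  rw [relabel_apply, cutSum_apply, cuts_map, List.map_map]
  rfl

theorem cutSum_zero_coboundary (W : List (Option α) → R) :
    cutSum 0 (coboundary Option.isSome W) = coboundary (fun _ => true) (cutSum 0 W) := by
  rw [cutSum_zero_apply, cutSum_zero_apply]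
  exact (coboundary_relabel _ _ some (fun _ => rfl) W).symm

theorem cutSum_succ_coboundary_cons {n : ℕ} {W : List (Option α) → R} {t : α} {v : List α}
    (h₁ : cutSum n (coboundary Option.isSome fun u => W (some t :: none :: u)) (t :: v) =
      coboundary (fun _ => true) (cutSum n fun u => W (some t :: none :: u)) (t :: v))
    (h₂ : cutSum (n + 1) (coboundary Option.isSome fun u => W (some t :: u)) v =
      coboundary (fun _ => true) (cutSum (n + 1) fun u => W (some t :: u)) v +
        cutSum n (fun u => W (some t :: none :: u)) v) :
    cutSum (n + 1) (coboundary Option.isSome W) (t :: v) =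
      coboundary (fun _ => true) (cutSum (n + 1) W) (t :: v) +
        cutSum n (fun u => W (none :: u)) (t :: v) := by
  have e₁ : (fun u => coboundary Option.isSome W (some t :: none :: u)) =
      (fun u => W (none :: u)) + coboundary Option.isSome fun u => W (some t :: none :: u) := by
    funext u
    simp [coboundary_cons]
  have e₂ : (fun u => coboundary Option.isSome W (some t :: u)) =
      W - coboundary Option.isSome fun u => W (some t :: u) := by
    simp [coboundary_comp_cons]
  have e₃ : (fun v => cutSum (n + 1) W (t :: v)) =
      (fun v => cutSum n (fun u => W (some t :: none :: u)) (t :: v)) +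
        cutSum (n + 1) fun u => W (some t :: u) := by
    funext v
    exact cutSum_succ_cons n W t v
  rw [cutSum_succ_cons, e₁, e₂, coboundary_cons _ _ t, e₃]
  simp only [map_add, map_sub, Pi.add_apply, Pi.sub_apply, h₁, h₂, coboundary_cons, if_true]
  abel

theorem cutSum_succ_coboundary (n : ℕ) {W : List (Option α) → R}
    (h₁ : ∀ l r, W (l ++ none :: none :: r) = 0) (h₂ : ∀ l, W (l ++ [none]) = 0) :
    cutSum (n + 1) (coboundary Option.isSome W) =
      coboundary (fun _ => true) (cutSum (n + 1) W) + cutSum n fun u => W (none :: u) := by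
  funext v
  induction n generalizing W v with
  | zero =>
    induction v generalizing W with
    | nil =>
      have h : W [none] = 0 := h₂ []
      simp [cutSum_succ_nil, coboundary_nil, cutSum_zero_apply, relabel_apply, h]
    | cons t v ih =>
      refine cutSum_succ_coboundary_cons (by rw [cutSum_zero_coboundary]) (ih ?_ ?_)
      exacts [fun l r => h₁ (some t :: l) r, fun l => h₂ (some t :: l)]
  | succ n ihn =>
    induction v generalizing W with
    | nil => simp [cutSum_succ_nil, coboundary_nil]
    | cons t v ih =>
      refine cutSum_succ_coboundary_cons ?_ (ih ?_ ?_)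
      · have h : (fun u => W (some t :: none :: none :: u)) = 0 := funext fun u => h₁ [some t] u
        rw [ihn (fun l r => h₁ (some t :: none :: l) r) fun l => h₂ (some t :: none :: l), h,
          map_zero, add_zero]
      exacts [fun l r => h₁ (some t :: l) r, fun l => h₂ (some t :: l)]

theorem cutSum_coboundary (n : ℕ) {W : List (Option α) → R}
    (h₁ : ∀ l r, W (l ++ none :: none :: r) = 0) (h₂ : ∀ l, W (l ++ [none]) = 0)
    (h₃ : ∀ u, W (none :: u) = 0) :
    cutSum n (coboundary Option.isSome W) = coboundary (fun _ => true) (cutSum n W) := by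
  cases n with
  | zero => exact cutSum_zero_coboundary W
  | succ n =>
    rw [cutSum_succ_coboundary n h₁ h₂, show (fun u => W (none :: u)) = 0 from funext h₃,
      map_zero, add_zero]

end Cutting

section Cells

variable {α β R : Type*} [DecidableEq α] [DecidableEq β] [Ring R]

/-- The set of letters of the `i`-th block of a word, the blocks being separated by `none`. -/
def block : List (Option α) → ℕ → Finset α
  | [], _ => ∅
  | some t :: u, 0 => insert t (block u 0)
  | some _ :: u, i + 1 => block u (i + 1)
  | none :: _, 0 => ∅
  | none :: u, i + 1 => block u i

/-- The words that index the cells of the complex of splittings: they have `n + 1` nonempty blocks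
and at most `d + 1` runs of letters. The first and the last letter of a block may be different, in
which case the cell is a family of splittings and not a single one. -/
structure IsCell (n d : ℕ) (u : List (Option α)) : Prop where
  count_none : u.count none = n
  block_nonempty : ∀ i ≤ n, (block u i).Nonempty
  runCount_le : runCount u.reduceOption ≤ d + 1

theorem block_append_none_none (l r : List (Option α)) :
    block (l ++ none :: none :: r) (l.count none + 1) = ∅ := by
  induction l with
  | nil => simp [block]
  | cons a l ih => cases a <;> simp [block, ih]

theorem block_append_none (l : List (Option α)) :
    block (l ++ [none]) (l.count none + 1) = ∅ := by
  induction l with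
  | nil => simp [block]
  | cons a l ih => cases a <;> simp [block, ih]

theorem block_map (f : α → β) (u : List (Option α)) (i : ℕ) :
    block (u.map (Option.map f)) i = (block u i).image f := by
  fun_induction block u i <;> simp_all [block]

theorem count_none_map (f : α → β) (u : List (Option α)) :
    (u.map (Option.map f)).count none = u.count none := by
  induction u with
  | nil => rfl
  | cons a u ih => cases a <;> simp_all

theorem isCell_map_iff {f : α → β} (hf : Function.Injective f) {n d : ℕ} {u : List (Option α)} :
    IsCell n d (u.map (Option.map f)) ↔ IsCell n d u := by
  have h₁ := count_none_map f u
  have h₂ (i : ℕ) : (block (u.map (Option.map f)) i).Nonempty ↔ (block u i).Nonempty := by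
    rw [block_map, image_nonempty]
  have h₃ : runCount (u.map (Option.map f)).reduceOption = runCount u.reduceOption := by
    rw [List.reduceOption_map, runCount_map hf]
  exact ⟨fun ⟨k₁, k₂, k₃⟩ => ⟨h₁.symm.trans k₁, fun i hi => (h₂ i).1 (k₂ i hi), h₃.ge.trans k₃⟩,
    fun ⟨k₁, k₂, k₃⟩ => ⟨h₁.trans k₁, fun i hi => (h₂ i).2 (k₂ i hi), h₃.trans_le k₃⟩⟩

theorem IsFace.block_subset {v u : List (Option α)} (h : IsFace Option.isSome v u) (i : ℕ) :
    block v i ⊆ block u i := by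
  induction h generalizing i with
  | @head a u ha =>
    obtain ⟨t, rfl⟩ := Option.isSome_iff_exists.1 ha
    cases i <;> simp [block]
  | cons a _ ih => cases a <;> cases i <;> simp [block, ih, insert_subset_insert]

theorem IsFace.count_none {v u : List (Option α)} (h : IsFace Option.isSome v u) :
    v.count none = u.count none := by
  induction h with
  | @head a u ha =>
    obtain ⟨t, rfl⟩ := Option.isSome_iff_exists.1 ha
    simp
  | cons a _ ih => simp [List.count_cons, ih]

theorem IsFace.isCell {n d : ℕ} {v u : List (Option α)} (h : IsFace Option.isSome v u)
    (hu : IsCell n d u) (hv : ∀ i ≤ n, (block v i).Nonempty) : IsCell n d v where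
  count_none := h.count_none.trans hu.count_none
  block_nonempty := hv
  runCount_le := (runCount_le_of_sublist (h.sublist.filterMap _)).trans hu.runCount_le

theorem block_nonempty_of_mem_cuts {n : ℕ} {v : List α} {u : List (Option α)} (hu : u ∈ cuts n v)
    (hv : v ≠ []) : ∀ i ≤ n, (block u i).Nonempty := by
  fun_induction cuts n v generalizing u with
  | case1 v =>
    obtain ⟨t, v, rfl⟩ := List.exists_cons_of_ne_nil hv
    simp_all [block]
  | case2 => simp at hu
  | case3 n t v ih₁ ih₂ =>
    rw [List.mem_append, List.mem_map, List.mem_map] at hu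
    obtain ⟨u, hu, rfl⟩ | ⟨u, hu, rfl⟩ := hu <;> rintro (- | i) hi <;>
      simp only [block, insert_nonempty]
    · exact ih₁ hu hv i (by omega)
    · exact ih₂ hu (by rintro rfl; simp [cuts] at hu) _ hi

theorem count_none_of_mem_cuts {n : ℕ} {v : List α} {u : List (Option α)} (hu : u ∈ cuts n v) :
    u.count none = n := by
  fun_induction cuts n v generalizing u with
  | case1 v => simp_all [List.count_eq_zero]
  | case2 => simp at hu
  | case3 n t v ih₁ ih₂ =>
    rw [List.mem_append, List.mem_map, List.mem_map] at hu
    obtain ⟨u, hu, rfl⟩ | ⟨u, hu, rfl⟩ := hu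
    · simp [ih₁ hu]
    · simp [ih₂ hu]

theorem runCount_cons_reduceOption_of_mem_cuts {n : ℕ} {v : List α} {u : List (Option α)}
    (hu : u ∈ cuts n v) (s : α) : runCount (s :: u.reduceOption) = runCount (s :: v) := by
  fun_induction cuts n v generalizing u s with
  | case1 v =>
    obtain rfl : u = v.map some := by simpa using hu
    rw [List.reduceOption, List.filterMap_map]
    simp
  | case2 => simp at hu
  | case3 n t v ih₁ ih₂ =>
    rw [List.mem_append, List.mem_map, List.mem_map] at hu
    obtain ⟨u, hu, rfl⟩ | ⟨u, hu, rfl⟩ := hu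
    · simp [runCount_cons_cons, ih₁ hu]
    · simp [runCount_cons_cons, ih₂ hu]

theorem isCell_of_mem_cuts {n d : ℕ} {v : List α} {u : List (Option α)} (hu : u ∈ cuts n v)
    (hv : v.length = d + 1) : IsCell n d u where
  count_none := count_none_of_mem_cuts hu
  block_nonempty := block_nonempty_of_mem_cuts hu (List.ne_nil_of_length_eq_add_one hv)
  runCount_le := by
    obtain ⟨t, v, rfl⟩ := List.exists_cons_of_length_eq_add_one hv
    calc runCount u.reduceOption ≤ runCount (t :: u.reduceOption) :=
          runCount_le_of_sublist (List.sublist_cons_self _ _)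
      _ = runCount (t :: v) := by
          rw [runCount_cons_reduceOption_of_mem_cuts hu, runCount_cons_cons, if_pos rfl, add_zero]
      _ ≤ d + 1 := hv ▸ runCount_le_length _

end Cells

section CellComplex

variable {α R : Type*} [DecidableEq α] [Ring R] {n d : ℕ}

open Classical in
/-- The projection of the cochains on all words to the cellular cochains, namely those that vanish
outside the cells. -/
noncomputable def cellProj (n d : ℕ) : Module.End R (List (Option α) → R) :=
  LinearMap.pi fun u => if IsCell n d u then LinearMap.proj u else 0

theorem cellProj_apply_of_isCell {u : List (Option α)} (hu : IsCell n d u)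
    (W : List (Option α) → R) : cellProj n d W u = W u := by
  simp [cellProj, hu]

theorem cellProj_apply_of_not_isCell {u : List (Option α)} (hu : ¬ IsCell n d u)
    (W : List (Option α) → R) : cellProj n d W u = 0 := by
  simp [cellProj, hu]

theorem cellProj_congr {V W : List (Option α) → R} (h : ∀ u, IsCell n d u → V u = W u) :
    cellProj n d V = cellProj n d W := by
  funext u
  by_cases hu : IsCell n d u
  · rw [cellProj_apply_of_isCell hu, cellProj_apply_of_isCell hu, h u hu]
  · rw [cellProj_apply_of_not_isCell hu, cellProj_apply_of_not_isCell hu]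

/-- The coboundary of the cellular cochain complex. -/
noncomputable def cellCoboundary (n d : ℕ) : Module.End R (List (Option α) → R) :=
  cellProj n d * coboundary Option.isSome * cellProj n d

theorem cellCoboundary_apply (W : List (Option α) → R) :
    cellCoboundary n d W = cellProj n d (coboundary Option.isSome (cellProj n d W)) := rfl

theorem cellCoboundary_cellProj (W : List (Option α) → R) :
    cellCoboundary n d (cellProj n d W) = cellCoboundary n d W := by
  rw [cellCoboundary_apply, cellProj_congr fun u hu => cellProj_apply_of_isCell hu W,
    cellCoboundary_apply]

theorem cellCoboundary_cellCoboundary (W : List (Option α) → R) :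
    cellCoboundary n d (cellCoboundary n d W) = 0 := by
  suffices h : ∀ u, IsCell n d u →
      coboundary Option.isSome (cellProj n d (cellCoboundary n d W)) u =
        coboundary Option.isSome (coboundary Option.isSome (cellProj n d W)) u by
    rw [cellCoboundary_apply, cellProj_congr h, coboundary_coboundary, map_zero]
  refine fun u hu => coboundary_congr fun v hv => ?_
  by_cases hv' : IsCell n d v
  · simp [cellCoboundary_apply, cellProj_apply_of_isCell hv']
  · rw [cellProj_apply_of_not_isCell hv']
    have h : coboundary Option.isSome (cellProj n d W) v = coboundary Option.isSome 0 v :=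
      coboundary_congr fun w hw => cellProj_apply_of_not_isCell
        (fun hw' => hv' (hv.isCell hu fun i hi =>
          (hw'.block_nonempty i hi).mono (hw.block_subset i))) W
    rw [h, map_zero, Pi.zero_apply]

theorem cellCoboundary_apply_congr {V W : List (Option α) → R} {u : List (Option α)}
    (h : ∀ v, IsCell n d u → IsCell n d v → IsFace Option.isSome v u → V v = W v) :
    cellCoboundary n d V u = cellCoboundary n d W u := by
  rw [cellCoboundary_apply, cellCoboundary_apply]
  by_cases hu : IsCell n d u
  · rw [cellProj_apply_of_isCell hu, cellProj_apply_of_isCell hu]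
    refine coboundary_congr fun v hv => ?_
    by_cases hv' : IsCell n d v
    · rw [cellProj_apply_of_isCell hv', cellProj_apply_of_isCell hv', h v hu hv' hv]
    · rw [cellProj_apply_of_not_isCell hv', cellProj_apply_of_not_isCell hv']
  · rw [cellProj_apply_of_not_isCell hu, cellProj_apply_of_not_isCell hu]

theorem cellProj_relabel {f : α → α} (hf : Function.Injective f) (W : List (Option α) → R) :
    cellProj n d (relabel (Option.map f) W) = relabel (Option.map f) (cellProj n d W) := by
  funext u
  rw [relabel_apply]
  by_cases hu : IsCell n d u
  · rw [cellProj_apply_of_isCell hu, cellProj_apply_of_isCell ((isCell_map_iff hf).2 hu),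
      relabel_apply]
  · rw [cellProj_apply_of_not_isCell hu,
      cellProj_apply_of_not_isCell fun h => hu ((isCell_map_iff hf).1 h)]

theorem cellCoboundary_relabel {f : α → α} (hf : Function.Injective f) (W : List (Option α) → R) :
    cellCoboundary n d (relabel (Option.map f) W) =
      relabel (Option.map f) (cellCoboundary n d W) := by
  rw [cellCoboundary_apply, cellProj_relabel hf,
    coboundary_relabel Option.isSome Option.isSome _ fun a => by simp, cellProj_relabel hf,
    cellCoboundary_apply]

theorem cutSum_coboundary_cellProj (W : List (Option α) → R) :
    cutSum n (coboundary Option.isSome (cellProj n d W)) =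
      coboundary (fun _ => true) (cutSum n (cellProj n d W)) := by
  refine cutSum_coboundary n (fun l r => ?_) (fun l => ?_) (fun u => ?_) <;>
    refine cellProj_apply_of_not_isCell (fun h => ?_) W
  · have hn : l.count none + 1 ≤ n := by
      rw [← h.count_none]; simp
    simpa [block_append_none_none] using h.block_nonempty _ hn
  · have hn : l.count none + 1 ≤ n := by
      rw [← h.count_none]; simp
    simpa [block_append_none] using h.block_nonempty _ hn
  · simpa [block] using h.block_nonempty 0 (Nat.zero_le n)

end CellComplex

section Evaluation

variable {R : Type*} [Ring R] {q n d k : ℕ}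

variable (R) in
/-- The evaluation of cochains at the images of the chains of `resolutionEval` under the iterated
Alexander-Whitney diagonal. -/
def cellEval (q n k : ℕ) : (List (Option (ZMod q)) → R) →ₗ[R] R :=
  resolutionEval R q k ∘ₗ cutSum n

theorem cellEval_cellProj (hk : k ≤ d) (W : List (Option (ZMod q)) → R) :
    cellEval R q n k (cellProj n d W) = cellEval R q n k W := by
  rw [← sub_eq_zero, ← map_sub]
  refine resolutionEval_eq_zero fun v hv => List.sum_eq_zero fun x hx => ?_
  obtain ⟨u, hu, rfl⟩ := List.mem_map.1 hx
  have hu' := isCell_of_mem_cuts hu hv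
  exact sub_eq_zero.2 (cellProj_apply_of_isCell
    ⟨hu'.count_none, hu'.block_nonempty, hu'.runCount_le.trans (by omega)⟩ W)

theorem cellEval_cellCoboundary (hk : k + 1 ≤ d) (W : List (Option (ZMod q)) → R) :
    cellEval R q n (k + 1) (cellCoboundary n d W) =
      cellEval R q n k (cyclicDifferential q k (relabel (Option.map (· + 1))) W) := by
  have hcut : cutSum n ∘ₗ relabel (Option.map (· + 1)) =
      relabel (R := R) (· + (1 : ZMod q)) ∘ₗ cutSum n :=
    LinearMap.ext fun V => (relabel_cutSum _ n V).symm
  have hcell : cellProj n d ∘ₗ relabel (Option.map (· + 1)) =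
      relabel (R := R) (Option.map (· + (1 : ZMod q))) ∘ₗ cellProj n d :=
    LinearMap.ext fun V => cellProj_relabel (add_left_injective 1) V
  calc cellEval R q n (k + 1) (cellCoboundary n d W)
      = resolutionEval R q (k + 1) (coboundary (fun _ => true) (cutSum n (cellProj n d W))) := by
        rw [cellCoboundary_apply, cellEval_cellProj hk, ← cutSum_coboundary_cellProj]; rfl
    _ = resolutionEval R q k
          (cyclicDifferential q k (relabel (· + 1)) (cutSum n (cellProj n d W))) :=
        resolutionEval_coboundary ..
    _ = cellEval R q n k
          (cyclicDifferential q k (relabel (Option.map (· + 1))) (cellProj n d W)) :=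
        congrArg _ (LinearMap.congr_fun (comp_cyclicDifferential hcut q k) _).symm
    _ = cellEval R q n k
          (cellProj n d (cyclicDifferential q k (relabel (Option.map (· + 1))) W)) :=
        congrArg _ (LinearMap.congr_fun (comp_cyclicDifferential hcell q k) W).symm
    _ = _ := cellEval_cellProj (by omega) _

end Evaluation

section Augmentation

variable {α β R : Type*} [Ring R]

/-- The cochain that is `1` at the words all of whose blocks consist of one letter, and `0` at all
other words. -/
def augmentation : List (Option α) → R
  | [some _] => 1
  | some _ :: none :: u => augmentation u
  | _ => 0

theorem relabel_augmentation (f : α → β) :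
    relabel (Option.map f) (augmentation : List (Option β) → R) = augmentation := by
  funext u
  rw [relabel_apply]
  fun_induction augmentation (R := R) u with
  | case1 => rfl
  | case2 _ _ ih => simpa [augmentation] using ih
  | case3 u h₁ h₂ =>
    rcases u with - | ⟨- | _, - | ⟨- | _, u⟩⟩ <;> simp_all [augmentation]

theorem augmentation_cons_some (s t : α) (u : List (Option α)) :
    (augmentation (some s :: u) : R) = augmentation (some t :: u) := by
  rcases u with - | ⟨- | _, u⟩ <;> simp [augmentation]

theorem coboundary_augmentation :
    coboundary Option.isSome (augmentation : List (Option α) → R) = 0 := by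
  have h₁ : (fun u : List (Option α) => (augmentation (none :: u) : R)) = 0 := by
    funext; simp [augmentation]
  have h₂ (s t : α) :
      (fun u : List (Option α) => (augmentation (some s :: some t :: u) : R)) = 0 := by
    funext; simp [augmentation]
  have h₃ (s : α) :
      (fun u : List (Option α) => (augmentation (some s :: none :: u) : R)) = augmentation := by
    funext; simp [augmentation]
  funext u
  induction h : u.length using Nat.strong_induction_on generalizing u with
  | _ k ih =>
    obtain - | ⟨- | s, u⟩ := u
    · rfl
    · simp [coboundary_cons, h₁]
    · obtain - | ⟨- | t, u⟩ := u
      · simp [coboundary_cons, coboundary_nil, augmentation]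
      · simpa [coboundary_cons, h₃, augmentation] using ih u.length (by grind) u rfl
      · simp [coboundary_cons, h₂, augmentation_cons_some s t]

theorem block_nonempty_of_augmentation_ne_zero [DecidableEq α] {u : List (Option α)}
    (h : (augmentation u : R) ≠ 0) {i : ℕ} (hi : i ≤ u.count none) : (block u i).Nonempty := by
  fun_induction augmentation (R := R) u generalizing i with
  | case1 =>
    obtain rfl : i = 0 := by simpa using hi
    simp [block]
  | case2 _ u ih =>
    cases i with
    | zero => simp [block]
    | succ i => exact ih h (by simpa using hi)
  | case3 => simp at h

theorem cellCoboundary_augmentation [DecidableEq α] (n d : ℕ) :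
    cellCoboundary n d (augmentation : List (Option α) → R) = 0 := by
  suffices h : ∀ u, IsCell n d u → coboundary Option.isSome (cellProj n d augmentation) u =
      coboundary Option.isSome (augmentation : List (Option α) → R) u by
    rw [cellCoboundary_apply, cellProj_congr h, coboundary_augmentation, map_zero]
  refine fun u hu => coboundary_congr fun v hv => ?_
  by_cases hv' : IsCell n d v
  · exact cellProj_apply_of_isCell hv' _
  · rw [cellProj_apply_of_not_isCell hv']
    by_contra h
    exact hv' (hv.isCell hu fun i hi => block_nonempty_of_augmentation_ne_zero (Ne.symm h)
      (by rwa [hv.count_none, hu.count_none]))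

theorem cellEval_augmentation (q n : ℕ) : cellEval R q n 0 augmentation = 1 := by
  change cutSum n augmentation [0] = 1
  induction n with
  | zero => simp [cutSum_apply, cuts, augmentation]
  | succ n ih => simpa [cutSum_apply, cuts, augmentation, Function.comp_def] using ih

end Augmentation

section Norm

theorem sub_one_mul_sum_geom_sum {A : Type*} [Ring A] {q : ℕ} (hq : (q : A) = 0) (x : A) :
    (x - 1) * ∑ i ∈ range q, ∑ j ∈ range i, x ^ j = ∑ i ∈ range q, x ^ i := by
  rw [mul_sum]
  simp [mul_geom_sum, hq]

theorem sum_geom_sum_mul_sub_one {A : Type*} [Ring A] {q : ℕ} (hq : (q : A) = 0) (x : A) :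
    (∑ i ∈ range q, ∑ j ∈ range i, x ^ j) * (x - 1) = ∑ i ∈ range q, x ^ i := by
  rw [sum_mul]
  simp [geom_sum_mul, hq]

theorem sum_range_val_add_one {R M : Type*} [Ring R] [AddCommGroup M] [Module R M] {q : ℕ}
    [NeZero q] {T : Module.End R M} {x : M} (hx : (∑ j ∈ range q, T ^ j) x = 0) (i : ZMod q) :
    (∑ j ∈ range (i + 1).val, T ^ j) x = x + T ((∑ j ∈ range i.val, T ^ j) x) := by
  have h : (∑ j ∈ range (i.val + 1), T ^ j) x = x + T ((∑ j ∈ range i.val, T ^ j) x) := by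
    rw [sum_range_succ', add_comm, ← Module.End.mul_apply, mul_sum]
    simp only [pow_succ', pow_zero, LinearMap.add_apply, Module.End.one_apply]
  have hval : (i + 1).val = (i.val + 1) % q := by
    rw [← ZMod.val_natCast, Nat.cast_add_one, ZMod.natCast_zmod_val]
  rw [← h, hval]
  obtain hi | hi : i.val + 1 < q ∨ i.val + 1 = q := (Nat.succ_le_of_lt i.val_lt).lt_or_eq
  · rw [Nat.mod_eq_of_lt hi]
  · rw [hi, Nat.mod_self, hx, range_zero, sum_empty, LinearMap.zero_apply]

end Norm

/-- The operator by which the generator of `ZMod q` acts on cochains. -/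
abbrev shift (q : ℕ) : Module.End (ZMod q) (List (Option (ZMod q)) → ZMod q) :=
  relabel (Option.map (· + 1))

theorem shift_apply {q : ℕ} (W : List (Option (ZMod q)) → ZMod q) (u : List (Option (ZMod q))) :
    shift q W u = W (u.map (Option.map (· + 1))) := rfl

theorem commute_cellCoboundary_shift (q n d : ℕ) : Commute (cellCoboundary n d) (shift q) :=
  LinearMap.ext fun W => cellCoboundary_relabel (add_left_injective 1) W

/-- A rank and a label for the cells, where the action of `ZMod q` preserves ranks and translates
labels. Ranks do not decrease from a cell to its faces, and a face of the same rank has the same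
label. -/
structure EquivariantRanking (q n d : ℕ) where
  rank : List (Option (ZMod q)) → ℕ
  label : List (Option (ZMod q)) → ZMod q
  rank_map {u : List (Option (ZMod q))} (hu : IsCell n d u) :
    rank (u.map (Option.map (· + 1))) = rank u
  label_map {u : List (Option (ZMod q))} (hu : IsCell n d u) :
    label (u.map (Option.map (· + 1))) = label u + 1
  rank_le_of_isFace {u v : List (Option (ZMod q))} (hu : IsCell n d u) (hv : IsCell n d v)
    (hvu : IsFace Option.isSome v u) : rank u ≤ rank v
  label_eq_of_isFace {u v : List (Option (ZMod q))} (hu : IsCell n d u) (hv : IsCell n d v)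
    (hvu : IsFace Option.isSome v u) (h : rank v = rank u) : label v = label u

namespace EquivariantRanking

variable {q n d : ℕ} (ρ : EquivariantRanking q n d)

/-- The cochains supported on the cells of rank less than `e`. -/
def supported (e : ℕ) : Submodule (ZMod q) (List (Option (ZMod q)) → ZMod q) where
  carrier := {W | ∀ u, (IsCell n d u → e ≤ ρ.rank u) → W u = 0}
  zero_mem' _ _ := rfl
  add_mem' hV hW u hu := by simp [hV u hu, hW u hu]
  smul_mem' r W hW u hu := by simp [hW u hu]

theorem shift_mem_supported {e : ℕ} {W : List (Option (ZMod q)) → ZMod q}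
    (hW : W ∈ ρ.supported e) : shift q W ∈ ρ.supported e := by
  refine fun u hu => hW _ fun hu' => ?_
  have hu'' := (isCell_map_iff (add_left_injective 1)).1 hu'
  exact (hu hu'').trans_eq (ρ.rank_map hu'').symm

theorem shift_pow_mem_supported {e : ℕ} {W : List (Option (ZMod q)) → ZMod q}
    (hW : W ∈ ρ.supported e) (i : ℕ) : (shift q ^ i) W ∈ ρ.supported e := by
  induction i with
  | zero => exact hW
  | succ i ih =>
    rw [pow_succ']
    exact ρ.shift_mem_supported ih

/-- Close to a cell of rank at least `e`, a cochain supported on the cells of rank at most `e` sees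
one label only. Hence cocycles that are glued along the labels form a cochain whose coboundary is
supported on the cells of lower rank. -/
theorem cellCoboundary_label_mem_supported {e : ℕ}
    {V : ZMod q → List (Option (ZMod q)) → ZMod q} (hV : ∀ i, V i ∈ ρ.supported (e + 1))
    (hV' : ∀ i, cellCoboundary n d (V i) = 0) :
    cellCoboundary n d (fun u => V (ρ.label u) u) ∈ ρ.supported e := by
  refine fun u hu => Eq.trans ?_ (congrFun (hV' (ρ.label u)) u)
  refine cellCoboundary_apply_congr fun v hu' hv hvu => ?_
  obtain h | h := lt_or_ge e (ρ.rank v)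
  · rw [hV _ v fun _ => h, hV _ v fun _ => h]
  · rw [ρ.label_eq_of_isFace hu' hv hvu
      (le_antisymm (h.trans (hu hu')) (ρ.rank_le_of_isFace hu' hv hvu))]

theorem apply_eq_zero_of_not_isCell {e : ℕ} {W : List (Option (ZMod q)) → ZMod q}
    (hW : W ∈ ρ.supported e) {u : List (Option (ZMod q))} (hu : ¬ IsCell n d u) : W u = 0 :=
  hW u fun h => absurd h hu

theorem shift_pow_label_apply {e : ℕ} {V : ZMod q → List (Option (ZMod q)) → ZMod q}
    (hV : ∀ i, V i ∈ ρ.supported e) (hV' : ∀ i, shift q (V i) = V i) (i : ℕ)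
    (u : List (Option (ZMod q))) :
    (shift q ^ i) (fun u => V (ρ.label u) u) u = V (ρ.label u + i) u := by
  have hmap (j : ZMod q) (u : List (Option (ZMod q))) :
      V j (u.map (Option.map (· + 1))) = V j u := congrFun (hV' j) u
  induction i generalizing u with
  | zero => simp
  | succ i ih =>
    rw [pow_succ', Module.End.mul_apply, shift_apply, ih]
    by_cases hu : IsCell n d u
    · rw [ρ.label_map hu, hmap, Nat.cast_add_one, add_assoc, add_comm 1]
    · rw [hmap, ρ.apply_eq_zero_of_not_isCell (hV _) hu, ρ.apply_eq_zero_of_not_isCell (hV _) hu]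

theorem geom_sum_shift_mem_supported {e : ℕ} {W : List (Option (ZMod q)) → ZMod q}
    (hW : W ∈ ρ.supported e) (i : ℕ) : (∑ j ∈ range i, shift q ^ j) W ∈ ρ.supported e := by
  rw [LinearMap.sum_apply]
  exact sum_mem fun j _ => ρ.shift_pow_mem_supported hW j

variable [NeZero q]

theorem exists_norm_eq {e : ℕ} {c : List (Option (ZMod q)) → ZMod q}
    (hc : c ∈ ρ.supported (e + 1)) (hc' : cellCoboundary n d c = 0) (hinv : shift q c = c) :
    ∃ W, cellCoboundary n d W ∈ ρ.supported e ∧ (∑ i ∈ range q, shift q ^ i) W = c := by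
  let V (i : ZMod q) : List (Option (ZMod q)) → ZMod q := if i = 0 then c else 0
  have hV (i : ZMod q) : V i ∈ ρ.supported (e + 1) := by
    unfold V
    split_ifs
    exacts [hc, zero_mem _]
  have hV' (i : ZMod q) : shift q (V i) = V i := by
    unfold V
    split_ifs
    exacts [hinv, map_zero _]
  refine ⟨fun u => V (ρ.label u) u, ρ.cellCoboundary_label_mem_supported hV fun i => ?_, ?_⟩
  · unfold V
    split_ifs
    exacts [hc', map_zero _]
  · funext u
    have hlabel : ρ.label u + ((-ρ.label u).val : ZMod q) = 0 := by
      rw [ZMod.natCast_zmod_val, add_neg_cancel]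
    rw [LinearMap.sum_apply, Finset.sum_apply, sum_eq_single_of_mem (-ρ.label u).val
      (mem_range.2 (ZMod.val_lt _)), ρ.shift_pow_label_apply hV hV', hlabel]
    · simp [V]
    · intro i hi hne
      have h : ρ.label u + i ≠ 0 := fun h => hne <| by
        rw [neg_eq_of_add_eq_zero_right h, ZMod.val_cast_of_lt (mem_range.1 hi)]
      simp [ρ.shift_pow_label_apply hV hV', V, h]

theorem exists_sub_one_eq {e : ℕ} {c : List (Option (ZMod q)) → ZMod q}
    (hc : c ∈ ρ.supported (e + 1)) (hc' : cellCoboundary n d c = 0)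
    (hnorm : (∑ i ∈ range q, shift q ^ i) c = 0) :
    ∃ W, cellCoboundary n d W ∈ ρ.supported e ∧ (shift q - 1) W = c := by
  let V (i : ZMod q) := -(∑ j ∈ range (-i).val, shift q ^ j) c
  have hV (i : ZMod q) : V i ∈ ρ.supported (e + 1) :=
    neg_mem (ρ.geom_sum_shift_mem_supported hc _)
  have hstep (i : ZMod q) : shift q (V (i + 1)) = V i + c := by
    have h := sum_range_val_add_one hnorm (-(i + 1))
    rw [neg_add_rev, neg_add_cancel_comm, add_comm] at h
    simp only [V, h, map_neg, neg_add_rev]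
    abel
  refine ⟨fun u => V (ρ.label u) u, ρ.cellCoboundary_label_mem_supported hV fun i => ?_, ?_⟩
  · have h := Commute.sum_right _ _ _ fun j (_ : j ∈ range (-i).val) =>
      (commute_cellCoboundary_shift q n d).pow_right j
    rw [map_neg, ← Module.End.mul_apply, h.eq, Module.End.mul_apply, hc', map_zero, neg_zero]
  · funext u
    by_cases hu : IsCell n d u
    · have h := congrFun (hstep (ρ.label u)) u
      rw [shift_apply, Pi.add_apply] at h
      rw [LinearMap.sub_apply, Module.End.one_apply, Pi.sub_apply, shift_apply, ρ.label_map hu, h,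
        add_sub_cancel_left]
    · have hmap := mt (isCell_map_iff (add_left_injective (1 : ZMod q))).1 hu
      rw [ρ.apply_eq_zero_of_not_isCell hc hu, LinearMap.sub_apply, Module.End.one_apply,
        Pi.sub_apply, shift_apply, ρ.apply_eq_zero_of_not_isCell (hV _) hu,
        ρ.apply_eq_zero_of_not_isCell (hV _) hmap, sub_zero]

theorem exists_supported_of_supported_add_two {e k : ℕ} (hk : Even k) (hkd : k + 2 ≤ d)
    {c : List (Option (ZMod q)) → ZMod q} (hc : c ∈ ρ.supported (e + 2))
    (hc' : cellCoboundary n d c = 0) (hinv : shift q c = c) :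
    ∃ c' ∈ ρ.supported e, cellCoboundary n d c' = 0 ∧ shift q c' = c' ∧
      cellEval (ZMod q) q n (k + 2) c' = cellEval (ZMod q) q n k c := by
  have hq : ((q : ℕ) : Module.End (ZMod q) (List (Option (ZMod q)) → ZMod q)) = 0 := by
    rw [← map_natCast (algebraMap (ZMod q) _), ZMod.natCast_self, map_zero]
  have hcomm {A : Module.End (ZMod q) (List (Option (ZMod q)) → ZMod q)}
      (hA : Commute (cellCoboundary n d) A) (V : List (Option (ZMod q)) → ZMod q) :
      cellCoboundary n d (A V) = A (cellCoboundary n d V) := LinearMap.congr_fun hA.eq V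
  have hgeom (i : ℕ) : Commute (cellCoboundary n d) (∑ j ∈ range i, shift q ^ j) :=
    .sum_right _ _ _ fun j _ => (commute_cellCoboundary_shift q n d).pow_right j
  obtain ⟨W, hW, hWc⟩ := ρ.exists_norm_eq hc hc' hinv
  obtain ⟨W', hW', hWc'⟩ := ρ.exists_sub_one_eq hW (cellCoboundary_cellCoboundary W)
    (by rw [← hcomm (hgeom q), hWc, hc'])
  refine ⟨cellCoboundary n d W', hW', cellCoboundary_cellCoboundary W', ?_, ?_⟩
  · rw [← hcomm (commute_cellCoboundary_shift q n d), ← sub_eq_zero, ← map_sub,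
      ← cellCoboundary_cellCoboundary W, ← hWc']
    rfl
  · set S := ∑ i ∈ range q, ∑ j ∈ range i, shift q ^ j
    have hSW' : (∑ i ∈ range q, shift q ^ i) W' = cellCoboundary n d (S W) := by
      rw [← sum_geom_sum_mul_sub_one hq, Module.End.mul_apply, hWc',
        hcomm (.sum_right _ _ _ fun i _ => hgeom i)]
    rw [cellEval_cellCoboundary hkd, cyclicDifferential, if_neg (by simpa [Nat.even_add_one]),
      hSW', cellEval_cellCoboundary (by omega), cyclicDifferential, if_pos hk,
      ← Module.End.mul_apply, sub_one_mul_sum_geom_sum hq, hWc]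

omit [NeZero q] in
theorem exists_le_rank (hd : Even d) (hq : 1 < q) : ∃ u, IsCell n d u ∧ d ≤ ρ.rank u := by
  have := Fact.mk hq
  have : NeZero q := ⟨by omega⟩
  by_contra! hrank
  obtain ⟨r, rfl⟩ := hd.two_dvd
  have key (j : ℕ) (hj : j ≤ r) : ∃ c ∈ ρ.supported (2 * (r - j)),
      cellCoboundary n (2 * r) c = 0 ∧ shift q c = c ∧ cellEval (ZMod q) q n (2 * j) c = 1 := by
    induction j with
    | zero =>
      refine ⟨cellProj n (2 * r) augmentation, fun u hu => ?_, ?_, ?_, ?_⟩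
      · exact cellProj_apply_of_not_isCell (fun h => (hrank u h).not_ge (hu h)) _
      · rw [cellCoboundary_cellProj, cellCoboundary_augmentation]
      · rw [← cellProj_relabel (add_left_injective 1), relabel_augmentation]
      · rw [mul_zero, cellEval_cellProj (Nat.zero_le _), cellEval_augmentation]
    | succ j ih =>
      obtain ⟨c, hc, hc', hinv, heval⟩ := ih (by omega)
      rw [show 2 * (r - j) = 2 * (r - (j + 1)) + 2 by omega] at hc
      obtain ⟨c', hmem, hcob, hinv', heval'⟩ := ρ.exists_supported_of_supported_add_two
        (even_two_mul j) (by omega) hc hc' hinv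
      exact ⟨c', hmem, hcob, hinv', heval'.trans heval⟩
  obtain ⟨c, hc, -, -, heval⟩ := key r le_rfl
  have hc0 : c = 0 := funext fun u => hc u (by simp)
  rw [hc0, map_zero] at heval
  exact zero_ne_one heval

end EquivariantRanking

section LeadingSet

variable {α β : Type*}

/-- The first index at which a sequence of finite sets has a nonempty term, with the junk value `0`
if there is none. -/
noncomputable def leadingIndex (S : ℕ → Finset α) : ℕ := sInf {j | (S j).Nonempty}

/-- The first nonempty term of a sequence of finite sets. -/
noncomputable def leadingSet (S : ℕ → Finset α) : Finset α := S (leadingIndex S)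

/-- The rank of a sequence of sets with less than `p` elements in the lexicographic order of the
index and the size of its leading set, where larger sets have smaller ranks. -/
noncomputable def leadingRank (p : ℕ) (S : ℕ → Finset α) : ℕ :=
  (p - 1) * leadingIndex S + (p - 1 - #(leadingSet S))

theorem leadingSet_nonempty {S : ℕ → Finset α} (hS : ∃ j, (S j).Nonempty) :
    (leadingSet S).Nonempty := Nat.sInf_mem hS

theorem leadingIndex_le {S : ℕ → Finset α} {j : ℕ} (h : (S j).Nonempty) : leadingIndex S ≤ j :=
  Nat.sInf_le h

theorem leadingIndex_image [DecidableEq β] (f : α → β) (S : ℕ → Finset α) :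
    leadingIndex (fun j => (S j).image f) = leadingIndex S := by
  simp only [leadingIndex, image_nonempty]

theorem leadingSet_image [DecidableEq β] (f : α → β) (S : ℕ → Finset α) :
    leadingSet (fun j => (S j).image f) = (leadingSet S).image f := by
  rw [leadingSet, leadingIndex_image, leadingSet]

theorem leadingRank_image [DecidableEq β] {f : α → β} (hf : f.Injective) (p : ℕ)
    (S : ℕ → Finset α) : leadingRank p (fun j => (S j).image f) = leadingRank p S := by
  rw [leadingRank, leadingIndex_image, leadingSet_image, card_image_of_injective _ hf, leadingRank]

theorem leadingRank_lt {p m : ℕ} (hp : 1 < p) {S : ℕ → Finset α} {j : ℕ} (hj : j < m)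
    (h : (S j).Nonempty) : leadingRank p S < (p - 1) * m := by
  have hcard := (leadingSet_nonempty ⟨j, h⟩).card_pos
  calc leadingRank p S < (p - 1) * (leadingIndex S + 1) := by
        rw [leadingRank, mul_add_one]
        omega
    _ ≤ (p - 1) * m := Nat.mul_le_mul_left _ ((leadingIndex_le h).trans_lt hj)

theorem leadingRank_lt_leadingRank {p : ℕ} (hp : 1 < p) {S T : ℕ → Finset α}
    (hS : ∃ j, (S j).Nonempty) (h : leadingIndex S < leadingIndex T) :
    leadingRank p S < leadingRank p T :=
  (leadingRank_lt hp h (leadingSet_nonempty hS)).trans_le (Nat.le_add_right _ _)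

theorem leadingIndex_le_leadingIndex {S T : ℕ → Finset α} (hT : ∃ j, (T j).Nonempty)
    (h : ∀ j, T j ⊆ S j) : leadingIndex S ≤ leadingIndex T :=
  leadingIndex_le ((leadingSet_nonempty hT).mono (h _))

theorem leadingRank_le_leadingRank {p : ℕ} (hp : 1 < p) {S T : ℕ → Finset α}
    (hT : ∃ j, (T j).Nonempty) (h : ∀ j, T j ⊆ S j) : leadingRank p S ≤ leadingRank p T := by
  obtain hlt | heq := (leadingIndex_le_leadingIndex hT h).lt_or_eq
  · exact (leadingRank_lt_leadingRank hp ⟨_, (leadingSet_nonempty hT).mono (h _)⟩ hlt).le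
  · have hcard : #(leadingSet T) ≤ #(leadingSet S) := by
      rw [leadingSet, leadingSet, heq]
      exact card_le_card (h _)
    rw [leadingRank, leadingRank, heq]
    omega

theorem leadingSet_eq_of_leadingRank_eq {p : ℕ} {S T : ℕ → Finset α}
    (hT : ∃ j, (T j).Nonempty) (h : ∀ j, T j ⊆ S j) (hS : #(leadingSet S) < p)
    (hrank : leadingRank p T = leadingRank p S) : leadingSet T = leadingSet S := by
  obtain hlt | heq := (leadingIndex_le_leadingIndex hT h).lt_or_eq
  · have hS' : ∃ j, (S j).Nonempty := ⟨_, (leadingSet_nonempty hT).mono (h _)⟩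
    have hp : 1 < p := (one_le_card.2 (leadingSet_nonempty hS')).trans_lt hS
    exact absurd hrank (leadingRank_lt_leadingRank hp hS' hlt).ne'
  · have hsub : leadingSet T ⊆ leadingSet S := by
      rw [leadingSet, leadingSet, heq]
      exact h _
    rw [leadingRank, leadingRank, heq] at hrank
    exact eq_of_subset_of_card_le hsub (by omega)

end LeadingSet

/-- The average of a finite subset of `ZMod p`, for `p` prime and nonempty sets with less than
`p` elements. -/
def average {p : ℕ} (s : Finset (ZMod p)) : ZMod p := (#s : ZMod p)⁻¹ * ∑ t ∈ s, t

theorem average_image_add_one {p : ℕ} [Fact p.Prime] {s : Finset (ZMod p)} (hs : s.Nonempty)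
    (hcard : #s < p) : average (s.image (· + 1)) = average s + 1 := by
  have h : (#s : ZMod p) ≠ 0 := fun h =>
    Nat.not_dvd_of_pos_of_lt hs.card_pos hcard ((ZMod.natCast_eq_zero_iff _ _).1 h)
  have hinj : Function.Injective (· + 1 : ZMod p → ZMod p) := add_left_injective 1
  rw [average, card_image_of_injective _ hinj, sum_image hinj.injOn, sum_add_distrib, sum_const,
    nsmul_one, mul_add, inv_mul_cancel₀ h, average]

/-- The ranking of the cells by the leading sets of sequences of sets that shrink along faces. -/
noncomputable def EquivariantRanking.ofLeadingSet {p n d : ℕ} [Fact p.Prime]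
    (S : List (Option (ZMod p)) → ℕ → Finset (ZMod p))
    (hmap : ∀ u, S (u.map (Option.map (· + 1))) = fun j => (S u j).image (· + 1))
    (hface : ∀ u v, IsFace Option.isSome v u → ∀ j, S v j ⊆ S u j)
    (hcard : ∀ u, IsCell n d u → ∀ j, #(S u j) < p)
    (hne : ∀ u, IsCell n d u → ∃ j, (S u j).Nonempty) : EquivariantRanking p n d where
  rank u := leadingRank p (S u)
  label u := average (leadingSet (S u))
  rank_map _ := by rw [hmap, leadingRank_image (add_left_injective 1)]
  label_map {u} hu := by
    rw [hmap, leadingSet_image, average_image_add_one (leadingSet_nonempty (hne u hu))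
      (hcard u hu _)]
  rank_le_of_isFace {u v} _ hv hvu :=
    leadingRank_le_leadingRank (Fact.out : p.Prime).one_lt (hne v hv) (hface u v hvu)
  label_eq_of_isFace {u v} hu hv hvu h := by
    rw [leadingSet_eq_of_leadingRank_eq (hne v hv) (hface u v hvu) (hcard u hu _) h]

theorem exists_isCell_forall_eq_empty {p n m : ℕ} [Fact p.Prime] (hd : Even ((p - 1) * m))
    (S : List (Option (ZMod p)) → ℕ → Finset (ZMod p))
    (hmap : ∀ u, S (u.map (Option.map (· + 1))) = fun j => (S u j).image (· + 1))
    (hface : ∀ u v, IsFace Option.isSome v u → ∀ j, S v j ⊆ S u j)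
    (hcard : ∀ u, IsCell n ((p - 1) * m) u → ∀ j, #(S u j) < p) :
    ∃ u, IsCell n ((p - 1) * m) u ∧ ∀ j < m, S u j = ∅ := by
  have hp := (Fact.out : p.Prime).one_lt
  by_contra! hne
  obtain ⟨u, hu, hle⟩ := (EquivariantRanking.ofLeadingSet S hmap hface hcard fun u hu =>
    let ⟨j, _, hj⟩ := hne u hu; ⟨j, hj⟩).exists_le_rank hd hp
  obtain ⟨j, hj, h⟩ := hne u hu
  exact (leadingRank_lt hp hj h).not_ge hle

section BlockCount

variable {α : Type*} [DecidableEq α]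

theorem sum_card_block_le : ∀ (k : ℕ) (u : List (Option α)),
    ∑ i ∈ range k, #(block u i) ≤ k + (runCount u.reduceOption - 1)
  | 0, _ => by simp
  | _ + 1, [] => by simp [block]
  | k + 1, none :: u => by
    have := sum_card_block_le k u
    simp only [sum_range_succ', block, card_empty, List.reduceOption_cons_of_none]
    omega
  | k + 1, [some t] => by
    simp only [sum_range_succ', block, insert_empty, card_singleton, card_empty, sum_const_zero]
    omega
  | k + 1, some t :: none :: u => by
    have := sum_card_block_le k u
    have := runCount_le_of_sublist (List.sublist_cons_self t u.reduceOption)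
    simp only [sum_range_succ', block, insert_empty, card_singleton,
      List.reduceOption_cons_of_some, List.reduceOption_cons_of_none]
    omega
  | k + 1, some t :: some s :: u => by
    have hsum := sum_card_block_le (k + 1) (some s :: u)
    have hpos := runCount_cons_pos s u.reduceOption
    have hcard : #(block (some t :: some s :: u) 0) ≤
        #(block (some s :: u) 0) + if t = s then 0 else 1 := by
      split_ifs with h
      · simp [block, h]
      · exact card_insert_le _ _
    simp only [sum_range_succ', block, List.reduceOption_cons_of_some,
      runCount_cons_cons] at hsum hcard ⊢
    omega

/-- The number of blocks of color `j` of a word that contain the letter `t`. -/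
def blockCount {k : ℕ} (c : Fin k → ℕ) (u : List (Option α)) (j : ℕ) (t : α) : ℕ :=
  #{i | c i = j ∧ t ∈ block u i}

variable {k : ℕ} (c : Fin k → ℕ)

theorem blockCount_map {β : Type*} [DecidableEq β] {f : α → β} (hf : f.Injective)
    (u : List (Option α)) (j : ℕ) (t : α) :
    blockCount c (u.map (Option.map f)) j (f t) = blockCount c u j t := by
  simp only [blockCount, block_map, hf.mem_finset_image]

theorem IsFace.blockCount_le {u v : List (Option α)} (h : IsFace Option.isSome v u) (j : ℕ)
    (t : α) : blockCount c v j t ≤ blockCount c u j t :=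
  card_le_card <| monotone_filter_right _ fun i _ hi => ⟨hi.1, h.block_subset i hi.2⟩

theorem sum_blockCount_eq [Fintype α] (u : List (Option α)) (j : ℕ) :
    ∑ t, blockCount c u j t = ∑ i with c i = j, #(block u i) := by
  simp only [blockCount, ← filter_filter, card_filter (fun i : Fin k => _ ∈ block u i)]
  rw [sum_comm]
  simp

theorem IsCell.sum_blockCount_le [Fintype α] {n d : ℕ} (c : Fin (n + 1) → ℕ)
    {u : List (Option α)} (hu : IsCell n d u) (j : ℕ) :
    ∑ t, blockCount c u j t ≤ #{i | c i = j} + d := by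
  have hsum : ∑ i : Fin (n + 1), #(block u i) ≤ n + 1 + d := by
    have h := sum_card_block_le (n + 1) u
    have hrun := hu.runCount_le
    rw [Fin.sum_univ_eq_sum_range fun i => #(block u i)]
    omega
  have hother : #{i | ¬ c i = j} ≤ ∑ i with ¬ c i = j, #(block u i) := by
    simpa using card_nsmul_le_sum {i | ¬ c i = j} (fun i => #(block u i)) 1 fun i _ =>
      (hu.block_nonempty i (Fin.is_le i)).card_pos
  have hcard := card_filter_add_card_filter_not (s := univ) (fun i => c i = j)
  rw [card_univ, Fintype.card_fin] at hcard
  rw [← sum_filter_add_sum_filter_not _ (fun i => c i = j)] at hsum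
  rw [sum_blockCount_eq]
  omega

end BlockCount

/-- The letters that occur in too many blocks of color `j` of a word. -/
def excess {k p : ℕ} [NeZero p] (d : ℕ) (c : Fin k → ℕ) (u : List (Option (ZMod p))) (j : ℕ) :
    Finset (ZMod p) := {t | #{i | c i = j} + d < p * blockCount c u j t}

section Excess

variable {k p d : ℕ} [NeZero p] (c : Fin k → ℕ)

theorem excess_map_add_one (u : List (Option (ZMod p))) (j : ℕ) :
    excess d c (u.map (Option.map (· + 1))) j = (excess d c u j).image (· + 1) := by
  ext t
  obtain ⟨t, rfl⟩ : ∃ s, t = s + 1 := ⟨t - 1, (sub_add_cancel t 1).symm⟩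
  have hinj : Function.Injective (· + 1 : ZMod p → ZMod p) := add_left_injective 1
  have h := blockCount_map c hinj u j t
  rw [hinj.mem_finset_image]
  simp only [excess, mem_filter_univ, h]

theorem IsFace.excess_subset {u v : List (Option (ZMod p))} (h : IsFace Option.isSome v u)
    (j : ℕ) : excess d c v j ⊆ excess d c u j :=
  monotone_filter_right _ fun t _ ht => ht.trans_le (Nat.mul_le_mul_left _ (h.blockCount_le c j t))

theorem IsCell.card_excess_lt {n : ℕ} (c : Fin (n + 1) → ℕ) {u : List (Option (ZMod p))}
    (hu : IsCell n d u) (j : ℕ) : #(excess d c u j) < p := by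
  refine ((card_lt_iff_ne_univ _).2 fun h => ?_).trans_eq (ZMod.card p)
  have hlt : ∑ _ : ZMod p, (#{i | c i = j} + d) < ∑ t, p * blockCount c u j t :=
    sum_lt_sum_of_nonempty univ_nonempty fun _ _ => by simpa [excess] using h.ge (mem_univ _)
  rw [sum_const, card_univ, ZMod.card, smul_eq_mul, ← mul_sum] at hlt
  exact (hu.sum_blockCount_le c j).not_gt (lt_of_mul_lt_mul_left' hlt)

end Excess

theorem exists_isCell_forall_mul_blockCount_le {n m p : ℕ} [Fact p.Prime]
    (hd : Even ((p - 1) * m)) (c : Fin (n + 1) → ℕ) (hc : ∀ i, c i < m) :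
    ∃ u, IsCell n ((p - 1) * m) u ∧ ∀ j (t : ZMod p),
      p * blockCount c u j t ≤ #{i | c i = j} + (p - 1) * m := by
  obtain ⟨u, hu, h⟩ := exists_isCell_forall_eq_empty hd (excess ((p - 1) * m) c)
    (fun u => funext (excess_map_add_one c u)) (fun u v h => h.excess_subset c)
    fun u hu => hu.card_excess_lt c
  refine ⟨u, hu, fun j t => ?_⟩
  obtain hj | hj := lt_or_ge j m
  · simpa [excess] using filter_eq_empty_iff.1 (h j hj) (mem_univ t)
  · have hempty : blockCount c u j t = 0 :=
      card_filter_eq_zero_iff.2 fun i _ hi => ((hc i).trans_le hj).ne hi.1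
    simp [hempty]

section Supports

theorem mem_block_of_mem_block_cons_some {α : Type*} [DecidableEq α] {u : List (Option α)}
    {s t : α} {i : ℕ} (h : t ∈ block (some s :: u) i) (hne : i = 0 → t ≠ s) : t ∈ block u i := by
  cases i with
  | zero => exact mem_of_mem_insert_of_ne h (hne rfl)
  | succ i => exact h

theorem map_sublist_reduceOption {α ι : Type*} [DecidableEq α] {u : List (Option α)} {L : List ι}
    {e : ι → ℕ} {g : ι → α} (he : L.Pairwise fun x y => e x < e y)
    (hg : ∀ x ∈ L, g x ∈ block u (e x)) : (L.map g).Sublist u.reduceOption := by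
  induction u generalizing L e with
  | nil =>
    obtain rfl : L = [] := List.eq_nil_iff_forall_not_mem.2 fun x hx => notMem_empty _ (hg x hx)
    exact List.Sublist.slnil
  | cons a u ih =>
    cases a with
    | none =>
      have hpred (x : ι) (hx : x ∈ L) : ∃ k, e x = k + 1 ∧ g x ∈ block u k := by
        have h := hg x hx
        cases hk : e x with
        | zero => simp [hk, block] at h
        | succ k => exact ⟨k, rfl, by simpa [hk, block] using h⟩
      refine ih (e := fun x => e x - 1) (he.imp_of_mem fun {x y} hx _ hxy => ?_) fun x hx => ?_
      · obtain ⟨k, hk, -⟩ := hpred x hx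
        omega
      · obtain ⟨k, hk, h⟩ := hpred x hx
        simpa [hk] using h
    | some t =>
      rw [List.reduceOption_cons_of_some]
      cases L with
      | nil => exact List.nil_sublist _
      | cons x L =>
        obtain ⟨hx, he'⟩ := List.pairwise_cons.1 he
        have htail (y : ι) (hy : y ∈ L) : g y ∈ block u (e y) :=
          mem_block_of_mem_block_cons_some (hg y (List.mem_cons_of_mem _ hy)) fun h =>
            absurd (hx y hy) (h ▸ Nat.not_lt_zero _)
        by_cases hxt : g x = t
        · exact hxt ▸ (ih he' htail).cons_cons _
        · refine (ih he (List.forall_mem_cons.2 ⟨?_, htail⟩)).cons _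
          exact mem_block_of_mem_block_cons_some (hg x List.mem_cons_self) fun _ => hxt

theorem runCount_ofFn_le {α : Type*} [DecidableEq α] {n k : ℕ} {π : Fin k → Fin n}
    (hπ : Monotone π) {u : List (Option α)} {f : Fin n → α}
    (hf : ∀ i, ∃ x, π x = i ∧ f i ∈ block u x) :
    runCount (List.ofFn f) ≤ runCount u.reduceOption := by
  choose x hx hmem using hf
  refine runCount_le_of_sublist ?_
  rw [List.ofFn_eq_map]
  refine map_sublist_reduceOption (e := fun i => x i) ?_ fun i _ => hmem i
  exact (List.pairwise_lt_finRange n).imp fun {i j} hij => hπ.reflect_lt (by rwa [hx, hx])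

theorem card_divNat_eq {n M : ℕ} (i : Fin n) : #{x : Fin (n * M) | x.divNat = i} = M := by
  have h : ({x | x.divNat = i} : Finset (Fin (n * M))) =
      univ.map ((Function.Embedding.sectR i (Fin M)).trans finProdFinEquiv.toEmbedding) := by
    ext x
    obtain ⟨⟨j, y⟩, rfl⟩ := finProdFinEquiv.surjective x
    have hj : (finProdFinEquiv (j, y)).divNat = j :=
      congrArg Prod.fst (finProdFinEquiv.symm_apply_apply (j, y))
    simp [hj, eq_comm]
  rw [h, card_map, card_univ, Fintype.card_fin]

theorem exists_monotone_card_fiber_eq {n M : ℕ} (hn : 0 < n) (hM : 0 < M) :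
    ∃ (N : ℕ) (π : Fin (N + 1) → Fin n), Monotone π ∧ ∀ i, #{x | π x = i} = M := by
  have h : ∃ π : Fin (n * M) → Fin n, Monotone π ∧ ∀ i, #{x | π x = i} = M :=
    ⟨Fin.divNat, fun _ _ hxy => Nat.div_le_div_right hxy, card_divNat_eq⟩
  obtain ⟨N, hN⟩ := Nat.exists_eq_add_one.2 (Nat.mul_pos hn hM)
  rw [hN] at h
  exact ⟨N, h⟩

theorem card_filter_mem_of_card_fiber_eq {ι κ : Type*} [Fintype ι] [DecidableEq κ] {π : ι → κ}
    {M : ℕ} (hπ : ∀ i, #{x | π x = i} = M) (A : Finset κ) : #{x | π x ∈ A} = M * #A := by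
  rw [card_eq_sum_card_fiberwise (f := π) (t := A) fun x hx => by simpa using hx,
    sum_const_nat (m := M), mul_comm]
  intro i hi
  rw [← hπ i, filter_filter]
  congr! 2 with x
  simp +contextual [hi]

theorem mul_card_le_of_mul_blockCount_le {p d n k M : ℕ} [NeZero p] {π : Fin (k + 1) → Fin n}
    (hπ : ∀ i, #{x | π x = i} = M) (hM : p * d < M)
    {c : Fin n → ℕ} {u : List (Option (ZMod p))} (hu : IsCell k d u) {j : ℕ}
    (hcount : ∀ t, p * blockCount (c ∘ π) u j t ≤ #{x | (c ∘ π) x = j} + d)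
    {A : Finset (Fin n)} (hA : ∀ i ∈ A, c i = j) :
    p * #A ≤ #(A.biUnion fun i => ({x | π x = i} : Finset _).biUnion fun x => block u x) *
        #{i | c i = j} := by
  set N := A.biUnion fun i => ({x | π x = i} : Finset _).biUnion fun x => block u x with hN
  have hcover : M * #A ≤ ∑ t ∈ N, blockCount (c ∘ π) u j t := by
    rw [← card_filter_mem_of_card_fiber_eq hπ]
    refine (card_le_card fun x hx => ?_).trans card_biUnion_le
    obtain ⟨t, ht⟩ := hu.block_nonempty x (Fin.is_le x)
    rw [mem_filter_univ] at hx
    simp only [hN, mem_biUnion, mem_filter_univ, Function.comp_apply]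
    exact ⟨t, ⟨π x, hx, x, rfl, ht⟩, hA _ hx, ht⟩
  have hcolor : #{x | (c ∘ π) x = j} = M * #{i | c i = j} := by
    simpa using card_filter_mem_of_card_fiber_eq hπ {i | c i = j}
  have hcardN : #N ≤ p := (card_le_univ N).trans_eq (ZMod.card p)
  have hlt : M * (p * #A) < M * (#N * #{i | c i = j} + 1) :=
    calc M * (p * #A) = p * (M * #A) := mul_left_comm ..
      _ ≤ p * ∑ t ∈ N, blockCount (c ∘ π) u j t := Nat.mul_le_mul_left _ hcover
      _ ≤ #N * (M * #{i | c i = j} + d) := by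
        rw [mul_sum, ← smul_eq_mul, ← hcolor]
        exact sum_le_card_nsmul _ _ _ fun t _ => hcount t
      _ ≤ M * (#N * #{i | c i = j}) + p * d := by
        rw [mul_add, mul_left_comm]
        gcongr
      _ < M * (#N * #{i | c i = j} + 1) := by
        rw [mul_add_one]
        gcongr
  exact Nat.lt_add_one_iff.1 (lt_of_mul_lt_mul_left' hlt)

theorem exists_supports {p m n : ℕ} [Fact p.Prime] (hd : Even ((p - 1) * m)) (c : Fin n → Fin m) :
    ∃ s : Fin n → Finset (ZMod p),
      (∀ f : Fin n → ZMod p, (∀ i, f i ∈ s i) → runCount (List.ofFn f) ≤ (p - 1) * m + 1) ∧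
      ∀ j A, (∀ i ∈ A, c i = j) → p * #A ≤ #(A.biUnion s) * #{i | c i = j} := by
  obtain rfl | hn := n.eq_zero_or_pos
  · exact ⟨fun _ => ∅, by simp [runCount], fun j A _ => by simp [A.eq_empty_of_isEmpty]⟩
  obtain ⟨N, π, hπ, hfiber⟩ :=
    exists_monotone_card_fiber_eq hn (Nat.succ_pos (p * ((p - 1) * m)))
  obtain ⟨u, hu, hcount⟩ := exists_isCell_forall_mul_blockCount_le hd
    (fun x => (c (π x) : ℕ)) fun x => (c (π x)).is_lt
  refine ⟨fun i => ({x | π x = i} : Finset _).biUnion fun x => block u x,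
    fun f hf => (runCount_ofFn_le hπ fun i => ?_).trans hu.runCount_le, fun j A hA => ?_⟩
  · simpa using hf i
  · simpa only [Fin.val_inj] using mul_card_le_of_mul_blockCount_le (c := fun i => c i) hfiber
      (Nat.lt_succ_self _) hu (hcount j) fun i hi => congrArg _ (hA i hi)

end Supports

section Rounding

theorem biUnion_sigma_const {ι α : Type*} {β : α → Type*} [DecidableEq α]
    [∀ t, DecidableEq (β t)] (A : Finset ι) (s : ι → Finset α) (r : ∀ t, Finset (β t)) :
    (A.biUnion fun i => (s i).sigma r) = (A.biUnion s).sigma r := by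
  ext
  simp only [mem_biUnion, mem_sigma, ← and_assoc, exists_and_right]

theorem exists_forall_mem_forall_card_fiber_eq {ι α : Type*} [Fintype ι] [Fintype α]
    [DecidableEq α] {s : ι → Finset α} {q : α → ℕ} (hq : ∑ t, q t = Fintype.card ι)
    (h : ∀ A : Finset ι, #A ≤ ∑ t ∈ A.biUnion s, q t) :
    ∃ f : ι → α, (∀ i, f i ∈ s i) ∧ ∀ t, #{i | f i = t} = q t := by
  obtain ⟨g, hg, hgs⟩ := (all_card_le_biUnion_card_iff_exists_injective
    fun i => (s i).sigma fun t => range (q t)).1 fun A => by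
      simpa only [biUnion_sigma_const, card_sigma, card_range] using h A
  have hle (t : α) : #{i | (g i).1 = t} ≤ q t := by
    rw [← card_range (q t)]
    refine card_le_card_of_injOn (fun i => (g i).2) (fun i hi => ?_) fun i hi j hj hij => ?_
    · obtain rfl : (g i).1 = t := by simpa using hi
      exact (mem_sigma.1 (hgs i)).2
    · have hi' : (g i).1 = t := by simpa using hi
      have hj' : (g j).1 = t := by simpa using hj
      exact hg (Sigma.ext (hi'.trans hj'.symm) (heq_of_eq hij))
  refine ⟨fun i => (g i).1, fun i => (mem_sigma.1 (hgs i)).1, fun t => ?_⟩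
  refine (sum_eq_sum_iff_of_le fun t _ => hle t).1 ?_ t (mem_univ t)
  rw [hq, ← card_eq_sum_card_fiberwise fun _ _ => mem_univ _, card_univ]

theorem sum_div_three_add_ite (a : ℕ) (w N : Finset (Fin 3)) :
    ∑ t ∈ N, (a / 3 + if t ∈ w then 1 else 0) = #N * (a / 3) + #(N ∩ w) := by
  simp [sum_add_distrib]

theorem le_sum_div_three_add_ite {a b : ℕ} {w N : Finset (Fin 3)} (hw : #w = a % 3)
    (h : 3 * b ≤ #N * a) : b ≤ ∑ t ∈ N, (a / 3 + if t ∈ w then 1 else 0) := by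
  rw [sum_div_three_add_ite]
  have hunion := card_union_add_card_inter N w
  have hle : #(N ∪ w) ≤ 3 := card_le_univ _
  have hN : #N ≤ 3 := card_le_univ _
  generalize #N = k at *
  interval_cases k <;> omega

theorem exists_rounding {ι : Type*} [Fintype ι] {s : ι → Finset (Fin 3)} {w : Finset (Fin 3)}
    (hw : #w = Fintype.card ι % 3)
    (h : ∀ A : Finset ι, 3 * #A ≤ #(A.biUnion s) * Fintype.card ι) :
    ∃ f : ι → Fin 3, (∀ i, f i ∈ s i) ∧
      ∀ t, #{i | f i = t} = Fintype.card ι / 3 + if t ∈ w then 1 else 0 := by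
  refine exists_forall_mem_forall_card_fiber_eq ?_ fun A => le_sum_div_three_add_ite hw (h A)
  rw [sum_div_three_add_ite, univ_inter, hw, card_univ, Fintype.card_fin, Nat.div_add_mod]

theorem exists_rounding_of_coloring {ι κ : Type*} [Fintype ι] [DecidableEq κ] (c : ι → κ)
    {s : ι → Finset (Fin 3)} {w : κ → Finset (Fin 3)} (hw : ∀ j, #(w j) = #{i | c i = j} % 3)
    (h : ∀ j A, (∀ i ∈ A, c i = j) → 3 * #A ≤ #(A.biUnion s) * #{i | c i = j}) :
    ∃ f : ι → Fin 3, (∀ i, f i ∈ s i) ∧ ∀ j t, #{i | c i = j ∧ f i = t} =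
      #{i | c i = j} / 3 + if t ∈ w j then 1 else 0 := by
  classical
  have key (j : κ) := exists_rounding (s := fun i : {i // c i = j} => s i) (w := w j)
    (by rw [hw, Fintype.card_subtype]) fun A => by
      have hA := h j (A.map (Function.Embedding.subtype _)) (by simp +contextual)
      rwa [card_map, map_eq_image, image_biUnion, ← Fintype.card_subtype] at hA
  choose g hg hcard using key
  refine ⟨fun i => g (c i) ⟨i, rfl⟩, fun i => hg _ _, fun j t => ?_⟩
  rw [← Fintype.card_subtype (c · = j), ← hcard j t,
    ← card_map (Function.Embedding.subtype (c · = j))]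
  congr 1
  ext i
  rw [mem_filter_univ, mem_map]
  constructor
  · rintro ⟨rfl, h⟩
    exact ⟨⟨i, rfl⟩, by simpa using h, rfl⟩
  · rintro ⟨⟨i, rfl⟩, h, rfl⟩
    exact ⟨rfl, by simpa using h⟩

end Rounding

theorem card_cuts_eq {α : Type*} [DecidableEq α] {n : ℕ} (f : Fin n → α) :
    Nat.card {i : Fin n // ∃ h : (i : ℕ) + 1 < n, f i ≠ f ⟨(i : ℕ) + 1, h⟩} =
      runCount (List.ofFn f) - 1 := by
  rw [Nat.card_eq_fintype_card, Fintype.card_subtype]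
  induction n with
  | zero => rfl
  | succ n ih =>
    rw [Fin.card_filter_univ_succ']
    cases n with
    | zero =>
      rw [if_neg fun ⟨h, _⟩ => lt_irrefl _ h]
      rfl
    | succ n =>
      have h := ih fun i => f i.succ
      have hpos := runCount_cons_pos (f (Fin.succ 0)) (List.ofFn fun i : Fin n => f i.succ.succ)
      have hzero : (∃ h : ((0 : Fin (n + 2)) : ℕ) + 1 < n + 1 + 1,
          f 0 ≠ f ⟨((0 : Fin (n + 2)) : ℕ) + 1, h⟩) ↔ ¬ f 0 = f (Fin.succ 0) :=
        exists_prop_of_true (by simp)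
      rw [List.ofFn_succ] at h
      rw [List.ofFn_succ, List.ofFn_succ, runCount_cons_cons, if_congr hzero rfl rfl, ite_not,
        add_comm, Nat.sub_add_comm hpos, ← h]
      simp [Fin.succ]

end NecklaceSplitting

/-- Necklace splitting with advantages for three thieves: for any prescription
`w j` of the thieves (one if `a j ≡ 1`, two if `a j ≡ 2 (mod 3)`) who are to
receive `⌈a j / 3⌉` beads of color `j`, there is a fair `3`-splitting with at
most `2m` cuts realizing the prescription. -/
theorem necklace_advantage_three (n m : ℕ) (c : Fin n → Fin m)
    (a : Fin m → ℕ) (ha : ∀ j, a j = Nat.card {i : Fin n // c i = j})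
    (w : Fin m → Finset (Fin 3)) (hw : ∀ j, (w j).card = a j % 3) :
    ∃ f : Fin n → Fin 3,
      Nat.card {i : Fin n // ∃ h : (i : ℕ) + 1 < n, f i ≠ f ⟨(i : ℕ) + 1, h⟩} ≤ 2 * m ∧
      ∀ (j : Fin m) (t : Fin 3),
        Nat.card {i : Fin n // c i = j ∧ f i = t} =
          a j / 3 + if t ∈ w j then 1 else 0 := by
  obtain ⟨s, hcuts, hs⟩ := NecklaceSplitting.exists_supports (p := 3) (even_two_mul m) c
  simp only [Nat.card_eq_fintype_card, Fintype.card_subtype] at ha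
  obtain ⟨f, hf, hcard⟩ := NecklaceSplitting.exists_rounding_of_coloring c
    (fun j => (hw j).trans (by rw [ha])) hs
  refine ⟨f, ?_, fun j t => ?_⟩
  · rw [NecklaceSplitting.card_cuts_eq]
    exact Nat.sub_le_of_le_add (hcuts f hf)
  · rw [Nat.card_eq_fintype_card, Fintype.card_subtype, hcard, ha]
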